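/- Let E, F, G be Hilbert spaces over ℂ and let f : E → G and g : F → G be bounded linear operators. Then the range of f is contained in the range of g if and only if there exists a constant k > 0 such that ‖f* y‖_E ≤ k ‖g* y‖_F for every y ∈ G, where f* and g* denote the Hilbert-space adjoints of f and g. -/

import Mathlib

open ContinuousLinearMap

open InnerProductSpace

/-!
For a functional `φ` on `G`, its composition `φ.comp g` is the transpose of `g` applied to `φ`.
When `F` is reflexive, Hahn–Banach shows that `x` lies in the range of `g` exactly when
`‖φ x‖ ≤ C * ‖φ.comp g‖` for all `φ`, with `C` depending on `x`. Applied to `x = f v` for each `v`,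
this says that range inclusion is a pointwise bound on the functionals `φ.comp f`; by the uniform
boundedness principle the constant can then be chosen independently of `v`. On Hilbert spaces, the
Riesz representation identifies transposes with adjoints.
-/

section Normed

variable {𝕜 E F G : Type*} [RCLike 𝕜]
  [SeminormedAddCommGroup E] [NormedSpace 𝕜 E]
  [SeminormedAddCommGroup F] [NormedSpace 𝕜 F]

theorem exists_strongDual_comp_eq_of_norm_le {V : Type*} [AddCommGroup V] [Module 𝕜 V]
    (a : V →ₗ[𝕜] 𝕜) (b : V →ₗ[𝕜] F) {C : ℝ} (h : ∀ v, ‖a v‖ ≤ C * ‖b v‖) :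
    ∃ ψ : StrongDual 𝕜 F, ∀ v, ψ (b v) = a v := by
  obtain ⟨ψ, hψ, -⟩ := exists_extension_norm_eq _ (a.compLeftInverse b)
  exact ⟨ψ, fun v ↦ (hψ ⟨b v, v, rfl⟩).trans (a.compLeftInverse_apply_of_bdd b ⟨C, h⟩ v _ rfl)⟩

theorem exists_norm_le_mul_of_forall_apply [CompleteSpace E] {ι : Type*} {u : ι → E →L[𝕜] F}
    {r : ι → ℝ} (hr : ∀ i, 0 ≤ r i) (h : ∀ x, ∃ C, ∀ i, ‖u i x‖ ≤ C * r i) :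
    ∃ C, 0 < C ∧ ∀ i, ‖u i‖ ≤ C * r i := by
  have norm_inv_weight (i : ι) : ‖(r i : 𝕜)⁻¹‖ = (r i)⁻¹ := by
    rw [norm_inv, RCLike.norm_of_nonneg (hr i)]
  obtain ⟨C, hC⟩ : ∃ C, ∀ i : {i // 0 < r i}, ‖(r i : 𝕜)⁻¹ • u i‖ ≤ C := by
    refine banach_steinhaus fun x ↦ ?_
    obtain ⟨C, hC⟩ := h x
    refine ⟨C, fun i ↦ ?_⟩
    rw [smul_apply, norm_smul, norm_inv_weight, inv_mul_le_iff₀' i.2]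
    exact hC i
  refine ⟨max C 1, by positivity, fun i ↦ ?_⟩
  rcases (hr i).eq_or_lt with zero_eq | pos
  · refine opNorm_le_bound _ (by simp [← zero_eq]) fun x ↦ ?_
    obtain ⟨Cx, hCx⟩ := h x
    simpa [← zero_eq] using hCx i
  · calc ‖u i‖ ≤ C * r i := by
          rw [← inv_mul_le_iff₀' pos, ← norm_inv_weight, ← norm_smul]
          exact hC ⟨i, pos⟩
      _ ≤ max C 1 * r i := by gcongr; exact le_max_left C 1

theorem forall_exists_norm_apply_le_mul_iff [CompleteSpace E] {ι : Type*} {u : ι → E →L[𝕜] F}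
    {r : ι → ℝ} (hr : ∀ i, 0 ≤ r i) :
    (∀ x, ∃ C, ∀ i, ‖u i x‖ ≤ C * r i) ↔ ∃ C, 0 < C ∧ ∀ i, ‖u i‖ ≤ C * r i := by
  refine ⟨exists_norm_le_mul_of_forall_apply hr, fun ⟨C, _, hC⟩ x ↦ ⟨C * ‖x‖, fun i ↦ ?_⟩⟩
  calc ‖u i x‖ ≤ C * r i * ‖x‖ := (u i).le_of_opNorm_le (hC i) x
    _ = C * ‖x‖ * r i := mul_right_comm _ _ _

variable [NormedAddCommGroup G] [NormedSpace 𝕜 G]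

theorem mem_range_iff_exists_norm_strongDual_le
    (hF : Function.Surjective (NormedSpace.inclusionInDoubleDual 𝕜 F)) (g : F →L[𝕜] G) (x : G) :
    x ∈ Set.range g ↔ ∃ C, ∀ φ : StrongDual 𝕜 G, ‖φ x‖ ≤ C * ‖φ.comp g‖ := by
  constructor
  · rintro ⟨z, rfl⟩
    exact ⟨‖z‖, fun φ ↦ ((φ.comp g).le_opNorm z).trans_eq (mul_comm _ _)⟩
  · rintro ⟨C, hC⟩
    obtain ⟨ψ, hψ⟩ := exists_strongDual_comp_eq_of_norm_le
      (NormedSpace.inclusionInDoubleDual 𝕜 G x).toLinearMap (precomp 𝕜 g).toLinearMap hC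
    obtain ⟨z, rfl⟩ := hF ψ
    exact ⟨z, (SeparatingDual.eq_iff_forall_dual_eq (R := 𝕜)).mpr hψ⟩

theorem range_subset_iff_adjoint_norm_le_general [CompleteSpace E]
    (hF : Function.Surjective (NormedSpace.inclusionInDoubleDual 𝕜 F))
    (f : E →L[𝕜] G) (g : F →L[𝕜] G) :
    Set.range f ⊆ Set.range g ↔
      ∃ k : ℝ, 0 < k ∧ ∀ φ : StrongDual 𝕜 G, ‖φ.comp f‖ ≤ k * ‖φ.comp g‖ := by
  calc Set.range f ⊆ Set.range g
      ↔ ∀ x, f x ∈ Set.range g := Set.range_subset_iff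
    _ ↔ ∀ x, ∃ C, ∀ φ : StrongDual 𝕜 G, ‖φ.comp f x‖ ≤ C * ‖φ.comp g‖ :=
        forall_congr' fun x ↦ mem_range_iff_exists_norm_strongDual_le hF g (f x)
    _ ↔ ∃ k : ℝ, 0 < k ∧ ∀ φ : StrongDual 𝕜 G, ‖φ.comp f‖ ≤ k * ‖φ.comp g‖ :=
        forall_exists_norm_apply_le_mul_iff fun φ ↦ norm_nonneg (φ.comp g)

end Normed

section InnerProduct

variable {𝕜 E F : Type*} [RCLike 𝕜]
  [NormedAddCommGroup E] [InnerProductSpace 𝕜 E] [CompleteSpace E]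
  [NormedAddCommGroup F] [InnerProductSpace 𝕜 F] [CompleteSpace F]

variable (𝕜 E) in
theorem surjective_inclusionInDoubleDual_of_innerProductSpace :
    Function.Surjective (NormedSpace.inclusionInDoubleDual 𝕜 E) := by
  intro ψ
  let conjψ : StrongDual 𝕜 E :=
    (starL 𝕜 : 𝕜 ≃L⋆[𝕜] 𝕜).toContinuousLinearMap.comp (ψ.comp (innerSL 𝕜))
  refine ⟨(toDual 𝕜 E).symm conjψ, ContinuousLinearMap.ext fun φ ↦ ?_⟩
  obtain ⟨y, rfl⟩ := (toDual 𝕜 E).surjective φ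
  rw [NormedSpace.dual_def, toDual_apply_apply, ← inner_conj_symm, toDual_symm_apply]
  exact star_star (ψ (toDual 𝕜 E y))

theorem norm_toDual_comp (f : E →L[𝕜] F) (y : F) :
    ‖(toDual 𝕜 F y).comp f‖ = ‖adjoint f y‖ := by
  rw [← (toDual 𝕜 E).norm_map (adjoint f y)]
  congr 1
  ext x
  exact (adjoint_inner_left f x y).symm

end InnerProduct

/-- Range inclusion for bounded operators between Hilbert spaces is equivalent to a
norm majorization between the adjoints (Douglas-type lemma), the key lemma used in
the proof of Proposition 2.5. -/
theorem range_subset_iff_adjoint_norm_le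
    {E F G : Type*}
    [NormedAddCommGroup E] [InnerProductSpace ℂ E] [CompleteSpace E]
    [NormedAddCommGroup F] [InnerProductSpace ℂ F] [CompleteSpace F]
    [NormedAddCommGroup G] [InnerProductSpace ℂ G] [CompleteSpace G]
    (f : E →L[ℂ] G) (g : F →L[ℂ] G) :
    Set.range f ⊆ Set.range g ↔
      ∃ k : ℝ, 0 < k ∧ ∀ y : G,
        ‖ContinuousLinearMap.adjoint f y‖ ≤ k * ‖ContinuousLinearMap.adjoint g y‖ := by
  simpa only [(toDual ℂ G).surjective.forall, norm_toDual_comp] using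
    range_subset_iff_adjoint_norm_le_general
      (surjective_inclusionInDoubleDual_of_innerProductSpace ℂ F) f g
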